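/- arXiv:1111.0245 — 12 statements merged into one kernel-verified Lean document; each statement's English description precedes it below -/
import Mathlib

section
/- For a finite chain C with elements c_1 < c_2 < ... < c_n, the generating function of C-partitions satisfies f_C · ∏_{k=1}^{n} (1 − x_{c_1} x_{c_2} ⋯ x_{c_k}) = 1 as an identity of multivariate formal power series over ℤ. -/
open MvPowerSeries

open Classical in
noncomputable def pgf (α : Type*) [Fintype α] [PartialOrder α] : MvPowerSeries α ℤ :=
  fun d => if ∀ x y : α, x ≤ y → d y ≤ d x then 1 else 0

open Classical in
/-- The generating function of the `α`-partitions that vanish outside `s`. -/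
noncomputable def pgfOn {α : Type*} [PartialOrder α] (s : Finset α) : MvPowerSeries α ℤ :=
  fun d => if (∀ x y : α, x ≤ y → d y ≤ d x) ∧ ∀ x ∉ s, d x = 0 then 1 else 0

open Classical in
theorem coeff_pgfOn {α : Type*} [PartialOrder α] (s : Finset α) (d : α →₀ ℕ) :
    coeff d (pgfOn s) =
      if (∀ x y : α, x ≤ y → d y ≤ d x) ∧ ∀ x ∉ s, d x = 0 then 1 else 0 :=
  rfl

theorem pgfOn_univ (α : Type*) [Fintype α] [PartialOrder α] :
    pgfOn (Finset.univ : Finset α) = pgf α := by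
  classical
  funext d
  unfold pgfOn pgf
  congr 1
  simp

theorem pgfOn_empty (α : Type*) [PartialOrder α] : pgfOn (∅ : Finset α) = 1 := by
  classical
  ext d
  rw [coeff_pgfOn, coeff_one]
  congr 1
  simp only [eq_iff_iff]
  constructor
  · rintro ⟨-, h⟩
    ext x
    exact h x (Finset.notMem_empty x)
  · rintro rfl
    simp

theorem prod_X_eq_monomial_indicator {α : Type*} (s : Finset α) :
    ∏ b ∈ s, (X b : MvPowerSeries α ℤ) = monomial (Finsupp.indicator s fun _ _ => 1) 1 := by
  classical
  induction s using Finset.induction_on with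
  | empty =>
    have : (Finsupp.indicator (∅ : Finset α) fun _ _ => 1) = 0 := by ext; simp
    rw [this]; rfl
  | insert a s ha ih =>
    rw [Finset.prod_insert ha, ih, X, monomial_mul_monomial, one_mul]
    congr 2
    ext x
    by_cases hx : x = a
    · subst hx; simp [Finsupp.indicator_apply, ha]
    · simp [Finsupp.indicator_apply, hx]

theorem pgfOn_insert_mul {α : Type*} [LinearOrder α] (s : Finset α) (a : α)
    (hlt : ∀ x, x ∈ s ↔ x < a) :
    pgfOn (insert a s) * (1 - ∏ b ∈ insert a s, (X b : MvPowerSeries α ℤ)) = pgfOn s := by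
  classical
  have hmem : ∀ x, x ∈ insert a s ↔ x ≤ a := fun x => by
    rw [Finset.mem_insert, hlt, le_iff_eq_or_lt]
  ext d
  rw [mul_sub, mul_one, map_sub, prod_X_eq_monomial_indicator, coeff_mul_monomial, mul_one]
  simp only [coeff_pgfOn]
  set m : α →₀ ℕ := Finsupp.indicator (insert a s) fun _ _ => 1 with hm
  have hm1 : ∀ x, m x = if x ≤ a then 1 else 0 := fun x => by
    simp only [hm, Finsupp.indicator_apply, hmem, dite_eq_ite]
  simp only [hmem, hlt, not_le, not_lt, Finsupp.tsub_apply, hm1, Finsupp.le_def]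
  by_cases hd : (∀ x y : α, x ≤ y → d y ≤ d x) ∧ ∀ x, a < x → d x = 0
  · rw [if_pos hd]
    obtain ⟨hanti, hzero⟩ := hd
    by_cases ha : d a = 0
    · have hle : ¬ ∀ x, (if x ≤ a then 1 else 0) ≤ d x := fun h => by
        simpa [ha] using h a
      rw [if_neg hle, sub_zero, if_pos]
      exact ⟨hanti, fun x hx => Nat.le_zero.1 (ha ▸ hanti a x hx)⟩
    · rw [if_pos, if_pos, if_neg]
      · rfl
      · exact fun h => ha (h.2 a le_rfl)
      · refine ⟨fun x y hxy => ?_, fun x hx => by simp [hzero x hx]⟩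
        have := hanti x y hxy
        have := hzero y
        split_ifs <;> grind
      · intro x
        split_ifs with hx
        · have := hanti x a hx
          omega
        · exact Nat.zero_le _
  · rw [if_neg hd, if_neg (c := _ ∧ ∀ x, a ≤ x → d x = 0), ite_eq_right_iff.2]
    · rfl
    · intro hle
      rw [if_neg]
      rintro ⟨hanti, hzero⟩
      refine hd ⟨fun x y hxy => ?_, fun x hx => ?_⟩
      · have h1 := hanti x y hxy
        have h2 := hle x
        have h3 := hle y
        grind
      · simpa [hx.not_ge] using hzero x hx
    · exact fun h => hd ⟨h.1, fun x hx => h.2 x hx.le⟩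

theorem pgfOn_mul_prod {α : Type*} [Fintype α] [LinearOrder α] (s : Finset α)
    (hs : IsLowerSet (s : Set α)) :
    pgfOn s * ∏ a ∈ s, (1 - ∏ b ∈ Finset.univ.filter (· ≤ a), (X b : MvPowerSeries α ℤ)) = 1 := by
  induction s using Finset.induction_on_max with
  | empty => simp [pgfOn_empty]
  | insert a s hmax ih =>
    have hlt : ∀ x, x ∈ s ↔ x < a := fun x => ⟨hmax x, fun hx => by
      have : x ∈ insert a s := hs hx.le (Finset.mem_insert_self a s)
      exact (Finset.mem_insert.1 this).resolve_left hx.ne⟩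
    have hfilter : Finset.univ.filter (· ≤ a) = insert a s := by
      ext x
      simp [hlt, le_iff_eq_or_lt]
    rw [Finset.prod_insert (fun h => lt_irrefl a (hmax a h)), hfilter, ← mul_assoc,
      pgfOn_insert_mul s a hlt]
    refine ih fun x y hyx hx => ?_
    exact (hlt y).2 (hyx.trans_lt (hmax x hx))

theorem chain_pgf (α : Type*) [Fintype α] [LinearOrder α] :
    pgf α * ∏ a : α, (1 - ∏ b ∈ Finset.univ.filter (· ≤ a), (X b : MvPowerSeries α ℤ)) = 1 := by
  rw [← pgfOn_univ]
  exact pgfOn_mul_prod Finset.univ (by simpa using isLowerSet_univ)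
end

section
/- Let P be a finite poset, let b ∈ P be a removable element, let a ∈ P be the element covered by b, and let c ∈ P be the element covering b. Then (1 − x_b) · f_P = f_{P∖{b}}|_{x_c := x_b x_c} − x_b · (f_{P∖{b}}|_{x_a := x_a x_b}) as an identity of multivariate formal power series over ℤ, where P∖{b} denotes the induced subposet of P on the complement of {b} and its generating function is regarded as a series in the variables (x_u)_{u ∈ P}. -/
open MvPowerSeries

open Classical in
/-- `f_{P∖{b}}`, regarded as a series in the variables `(x_u)_{u ∈ P}`, with the
variable `x_w` replaced by the monomial `x_b * x_w`.  The substitution sends the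
monomial `∏_{u ≠ b} x_u^{τ(u)}` to `x_b^{τ(w)} ∏_{u ≠ b} x_u^{τ(u)}`, so the
coefficient at an exponent vector `e` is `1` iff `e b = e w` and the restriction
of `e` to `P∖{b}` is order-reversing. -/
noncomputable def delSub (α : Type*) [Fintype α] [PartialOrder α] (b w : α) :
    MvPowerSeries α ℤ :=
  fun e => if e b = e w ∧ ∀ x y : α, x ≠ b → y ≠ b → x ≤ y → e y ≤ e x then 1 else 0

/-- If `a` is the only element covered by `b` and `c` the only element covering `b`, a map is
order-reversing iff its restriction to the complement of `b` is and `d c ≤ d b ≤ d a`. -/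
theorem orderReversing_iff_of_covBy {α : Type*} [Finite α] [PartialOrder α] {a b c : α}
    (hab : a ⋖ b) (hbc : b ⋖ c)
    (ha : ∀ x : α, x ⋖ b → x = a) (hc : ∀ x : α, b ⋖ x → x = c) (d : α → ℕ) :
    (∀ x y : α, x ≤ y → d y ≤ d x) ↔
      (∀ x y : α, x ≠ b → y ≠ b → x ≤ y → d y ≤ d x) ∧ d c ≤ d b ∧ d b ≤ d a := by
  refine ⟨fun h => ⟨fun x y _ _ => h x y, h _ _ hbc.le, h _ _ hab.le⟩, ?_⟩
  rintro ⟨h, hcb, hba⟩ x y hxy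
  rcases eq_or_ne x b with rfl | hx <;> rcases eq_or_ne y x with rfl | hyx
  · rfl
  · obtain ⟨z, hz, hzy⟩ := exists_covBy_le_of_lt (lt_of_le_of_ne hxy hyx.symm)
    obtain rfl := hc z hz
    exact (h z y hbc.ne' hyx hzy).trans hcb
  · rfl
  · rcases eq_or_ne y b with rfl | hy
    · obtain ⟨z, hxz, hz⟩ := exists_le_covBy_of_lt (lt_of_le_of_ne hxy hx)
      obtain rfl := ha z hz
      exact hba.trans (h x z hx hab.ne hxz)
    · exact h x y hx hy hxy

/-- Decreasing the value at `b` does not affect the restriction to the complement of `b`. -/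
theorem orderReversing_compl_tsub_single_iff {α : Type*} [PartialOrder α] (b : α)
    (e : α →₀ ℕ) :
    (∀ x y : α, x ≠ b → y ≠ b → x ≤ y →
        (e - Finsupp.single b 1 : α →₀ ℕ) y ≤ (e - Finsupp.single b 1 : α →₀ ℕ) x) ↔
      ∀ x y : α, x ≠ b → y ≠ b → x ≤ y → e y ≤ e x := by
  refine forall₄_congr fun x y hx hy => ?_
  simp [Finsupp.single_eq_of_ne hx, Finsupp.single_eq_of_ne hy]

/-- Deletion of a removable element `b` with `a ⋖ b ⋖ c`:
`(1 - x_b) f_P = f_{P∖{b}}|_{x_c := x_b x_c} - x_b ⬝ f_{P∖{b}}|_{x_a := x_a x_b}`. -/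
theorem deletion_middle {α : Type*} [Fintype α] [PartialOrder α] (a b c : α)
    (hab : a ⋖ b) (hbc : b ⋖ c)
    (ha : ∀ x : α, x ⋖ b → x = a) (hc : ∀ x : α, b ⋖ x → x = c) :
    (1 - X b) * pgf α = delSub α b c - X b * delSub α b a := by
  classical
  ext e
  rw [sub_mul, one_mul, map_sub, map_sub, X_def, coeff_monomial_mul, coeff_monomial_mul]
  simp only [coeff_apply, pgf, delSub, orderReversing_iff_of_covBy hab hbc ha hc,
    orderReversing_compl_tsub_single_iff]
  simp only [Finsupp.single_le_iff, Finsupp.tsub_apply, Finsupp.single_eq_same,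
    Finsupp.single_eq_of_ne hab.ne, Finsupp.single_eq_of_ne hbc.ne', tsub_zero, one_mul]
  have hca : (∀ x y : α, x ≠ b → y ≠ b → x ≤ y → e y ≤ e x) → e c ≤ e a :=
    fun h => h a c hab.ne hbc.ne' (hab.le.trans hbc.le)
  split_ifs <;> first | rfl | (exfalso; clear ha hc; grind)
end

section
/- Let P be a finite poset, let b ∈ P be a removable element, let a ∈ P be the element covered by b, and suppose no element of P covers b. Then (1 − x_b) · f_P = f_{P∖{b}} − x_b · (f_{P∖{b}}|_{x_a := x_a x_b}) as an identity of multivariate formal power series over ℤ, where P∖{b} denotes the induced subposet of P on the complement of {b}. -/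
open MvPowerSeries

open Classical in
/-- `f_{P∖{b}}`, regarded as a series in the variables `(x_u)_{u ∈ P}`:
the coefficient at `e` is `1` iff `e b = 0` and the restriction of `e`
to `P∖{b}` is order-reversing. -/
noncomputable def delGF (α : Type*) [Fintype α] [PartialOrder α] (b : α) :
    MvPowerSeries α ℤ :=
  fun e => if e b = 0 ∧ ∀ x y : α, x ≠ b → y ≠ b → x ≤ y → e y ≤ e x then 1 else 0

/-- If `a` is the only element covered by the maximal element `b`, then `d` is order-reversing
iff `d b ≤ d a` and `d` is order-reversing away from `b`. -/
theorem orderReversing_iff_of_covBy_top {α β : Type*} [Finite α] [PartialOrder α] [Preorder β]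
    {a b : α} (hab : a ⋖ b) (ha : ∀ x : α, x ⋖ b → x = a) (hnoc : ∀ x : α, ¬ b ⋖ x)
    (d : α → β) :
    (∀ x y : α, x ≤ y → d y ≤ d x) ↔
      d b ≤ d a ∧ ∀ x y : α, x ≠ b → y ≠ b → x ≤ y → d y ≤ d x := by
  refine ⟨fun h => ⟨h a b hab.le, fun x y _ _ => h x y⟩, fun ⟨hba, h⟩ x y hxy => ?_⟩
  rcases hxy.eq_or_lt with rfl | hlt
  · exact le_rfl
  have hxb : x ≠ b := by
    rintro rfl
    obtain ⟨z, hz, -⟩ := exists_covBy_le_of_lt hlt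
    exact hnoc z hz
  by_cases hyb : y = b
  · subst hyb
    obtain ⟨z, hxz, hz⟩ := exists_le_covBy_of_lt hlt
    rw [ha z hz] at hxz
    exact hba.trans (h x a hxb hab.ne hxz)
  · exact h x y hxb hyb hxy

/-- The coefficients of `X s * φ`. -/
theorem MvPowerSeries.coeff_X_mul_eq_ite {σ R : Type*} [Semiring R] (s : σ)
    (φ : MvPowerSeries σ R) (e : σ →₀ ℕ) :
    coeff e (X s * φ) = if e s = 0 then 0 else coeff (e - Finsupp.single s 1) φ := by
  classical
  rw [X, coeff_monomial_mul, one_mul]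
  simp only [Finsupp.single_le_iff, Nat.one_le_iff_ne_zero, ite_not]

/-- Deletion of a removable element `b` with `a ⋖ b` and no element covering `b`:
`(1 - x_b) f_P = f_{P∖{b}} - x_b ⬝ f_{P∖{b}}|_{x_a := x_a x_b}`. -/
theorem deletion_top {α : Type*} [Fintype α] [PartialOrder α] (a b : α)
    (hab : a ⋖ b) (ha : ∀ x : α, x ⋖ b → x = a) (hnoc : ∀ x : α, ¬ b ⋖ x) :
    (1 - X b) * pgf α = delGF α b - X b * delSub α b a := by
  classical
  ext e
  have hoff : ∀ x, x ≠ b → (e - Finsupp.single b 1 : α →₀ ℕ) x = e x := fun x hx => by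
    simp [Finsupp.single_eq_of_ne hx]
  have hrev : (∀ x y : α, x ≠ b → y ≠ b → x ≤ y →
      (e - Finsupp.single b 1 : α →₀ ℕ) y ≤ (e - Finsupp.single b 1 : α →₀ ℕ) x) ↔
      ∀ x y : α, x ≠ b → y ≠ b → x ≤ y → e y ≤ e x :=
    forall₄_congr fun x y hx hy => by rw [hoff x hx, hoff y hy]
  have hb : (e - Finsupp.single b 1 : α →₀ ℕ) b = e b - 1 := by simp
  rw [sub_mul, one_mul, map_sub, map_sub, coeff_X_mul_eq_ite, coeff_X_mul_eq_ite]
  simp only [coeff_apply, pgf, delGF, delSub, orderReversing_iff_of_covBy_top hab ha hnoc,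
    hrev, hb, hoff a hab.ne]
  by_cases hq : ∀ x y : α, x ≠ b → y ≠ b → x ≤ y → e y ≤ e x
  · simp only [and_iff_left hq]
    split_ifs <;> first | rfl | omega
  · simp only [hq, and_false, if_false, ite_self]
end

section
/- Let P be a finite poset, let b ∈ P be a removable element covering no element of P, and let c ∈ P be the element covering b. Then (1 − x_b) · f_P = f_{P∖{b}}|_{x_c := x_b x_c} as an identity of multivariate formal power series over ℤ, where P∖{b} denotes the induced subposet of P on the complement of {b}. -/
open MvPowerSeries

/-- If `b` is a minimal element whose only cover is `c`, then `d` is a `P`-partition iff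
`d c ≤ d b` and the restriction of `d` to `P∖{b}` is a `P∖{b}`-partition. -/
theorem antitone_iff_of_forall_not_covBy {α β : Type*} [Finite α] [PartialOrder α] [Preorder β]
    {b c : α} (hnoa : ∀ x : α, ¬ x ⋖ b) (hbc : b ⋖ c) (hc : ∀ x : α, b ⋖ x → x = c) (d : α → β) :
    (∀ x y : α, x ≤ y → d y ≤ d x) ↔
      d c ≤ d b ∧ ∀ x y : α, x ≠ b → y ≠ b → x ≤ y → d y ≤ d x := by
  refine ⟨fun h => ⟨h b c hbc.le, fun x y _ _ => h x y⟩, fun ⟨hcb, h⟩ x y hxy => ?_⟩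
  rcases hxy.eq_or_lt with rfl | hlt
  · exact le_rfl
  have hy : y ≠ b := by
    rintro rfl
    obtain ⟨z, -, hz⟩ := exists_le_covBy_of_lt hlt
    exact hnoa z hz
  by_cases hx : x = b
  · subst hx
    obtain ⟨z, hz, hzy⟩ := exists_covBy_le_of_lt hlt
    obtain rfl := hc z hz
    exact (h z y hbc.ne' hy hzy).trans hcb
  · exact h x y hx hy hxy

/-- Deletion of a removable element `b` with `b ⋖ c` and `b` covering no element:
`(1 - x_b) f_P = f_{P∖{b}}|_{x_c := x_b x_c}`. -/
theorem deletion_bottom {α : Type*} [Fintype α] [PartialOrder α] (b c : α)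
    (hnoa : ∀ x : α, ¬ x ⋖ b) (hbc : b ⋖ c) (hc : ∀ x : α, b ⋖ x → x = c) :
    (1 - X b) * pgf α = delSub α b c := by
  classical
  ext d
  have hpgf (e : α →₀ ℕ) : coeff e (pgf α) =
      if e c ≤ e b ∧ ∀ x y : α, x ≠ b → y ≠ b → x ≤ y → e y ≤ e x then 1 else 0 :=
    if_congr (antitone_iff_of_forall_not_covBy hnoa hbc hc e) rfl rfl
  have hdel : coeff d (delSub α b c) =
      if d b = d c ∧ ∀ x y : α, x ≠ b → y ≠ b → x ≤ y → d y ≤ d x then 1 else 0 :=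
    if_congr Iff.rfl rfl rfl
  have hsub {x : α} (hx : x ≠ b) : (d - Finsupp.single b 1 : α →₀ ℕ) x = d x := by
    simp [hx]
  have hrestrict : (∀ x y : α, x ≠ b → y ≠ b → x ≤ y →
      (d - Finsupp.single b 1 : α →₀ ℕ) y ≤ (d - Finsupp.single b 1 : α →₀ ℕ) x) ↔
      ∀ x y : α, x ≠ b → y ≠ b → x ≤ y → d y ≤ d x :=
    forall₄_congr fun x y hx hy => by rw [hsub hx, hsub hy]
  rw [sub_mul, one_mul, map_sub, X_def, coeff_monomial_mul, one_mul, hpgf, hpgf, hdel]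
  simp only [hrestrict, hsub hbc.ne', Finsupp.single_le_iff]
  rw [Finsupp.tsub_apply, Finsupp.single_eq_same]
  split_ifs <;> grind
end

section
/- Let P be a finite poset, A an antichain of P, and M a nonempty subset of A. Then the relation on (P∖M) ∪ {M} defined by clauses (a)–(e) of the partially linear extension P(M,A) is reflexive, antisymmetric and transitive, i.e. it is a partial order. -/
/-- The relation of the partially linear extension `P(M,A)`: the underlying set is
`(P∖M) ∪ {M}`, where the glued element `M` is represented by `none`. -/
def pleRel {α : Type*} [PartialOrder α] (A M : Finset α) :
    Option {u : α // u ∉ M} → Option {u : α // u ∉ M} → Prop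
  | some x, some y => x.1 ≤ y.1 ∨ ∃ x' ∈ A, ∃ y' ∈ M, x.1 ≤ x' ∧ y' ≤ y.1
  | some x, none => ∃ x' ∈ A, x.1 ≤ x'
  | none, some y => ∃ y' ∈ M, y' ≤ y.1
  | none, none => True

/-- No element outside `M` lies between an element of `M` and an element of `A`. -/
theorem IsAntichain.not_le_of_le_of_notMem {α : Type*} [PartialOrder α] {A M : Finset α}
    (hA : IsAntichain (· ≤ ·) (A : Set α)) (hMA : M ⊆ A) {m u a : α} (hm : m ∈ M)
    (hu : u ∉ M) (ha : a ∈ A) (hmu : m ≤ u) : ¬ u ≤ a := by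
  intro hua
  obtain rfl : m = a := hA.eq (hMA hm) ha (hmu.trans hua)
  exact hu (le_antisymm hua hmu ▸ hm)

/-- For an antichain `A` of a finite poset `P` and a nonempty `M ⊆ A`, the relation
of the partially linear extension `P(M,A)` is reflexive, antisymmetric and
transitive, i.e. it is a partial order. -/
theorem pleRel_isPartialOrder {α : Type*} [Fintype α] [PartialOrder α]
    (A M : Finset α) (hA : IsAntichain (· ≤ ·) (A : Set α)) (hMA : M ⊆ A)
    (hM : M.Nonempty) :
    (∀ x, pleRel A M x x) ∧
    (∀ x y, pleRel A M x y → pleRel A M y x → x = y) ∧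
    (∀ x y z, pleRel A M x y → pleRel A M y z → pleRel A M x z) := by
  refine ⟨?_, ?_, ?_⟩
  · rintro (_ | x)
    · trivial
    · exact Or.inl le_rfl
  · rintro (_ | ⟨x, hx⟩) (_ | ⟨y, hy⟩) hxy hyx
    · rfl
    · obtain ⟨m, hm, hmy⟩ := hxy
      obtain ⟨a, ha, hya⟩ := hyx
      exact (hA.not_le_of_le_of_notMem hMA hm hy ha hmy hya).elim
    · obtain ⟨a, ha, hxa⟩ := hxy
      obtain ⟨m, hm, hmx⟩ := hyx
      exact (hA.not_le_of_le_of_notMem hMA hm hx ha hmx hxa).elim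
    · rcases hxy with hxy | ⟨a, ha, m, hm, hxa, hmy⟩
      · rcases hyx with hyx | ⟨b, hb, n, hn, hyb, hnx⟩
        · exact congrArg some (Subtype.ext (le_antisymm hxy hyx))
        · exact (hA.not_le_of_le_of_notMem hMA hn hx hb hnx (hxy.trans hyb)).elim
      · rcases hyx with hyx | ⟨b, hb, n, hn, hyb, hnx⟩
        · exact (hA.not_le_of_le_of_notMem hMA hm hy ha hmy (hyx.trans hxa)).elim
        · exact (hA.not_le_of_le_of_notMem hMA hm hy hb hmy hyb).elim
  · rintro (_ | x) (_ | y) (_ | z) hxy hyz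
    · trivial
    · exact hyz
    · trivial
    · obtain ⟨m, hm, hmy⟩ := hxy
      rcases hyz with hyz | ⟨b, hb, n, hn, hyb, hnz⟩
      · exact ⟨m, hm, hmy.trans hyz⟩
      · exact ⟨n, hn, hnz⟩
    · exact hxy
    · obtain ⟨a, ha, hxa⟩ := hxy
      obtain ⟨m, hm, hmz⟩ := hyz
      exact Or.inr ⟨a, ha, m, hm, hxa, hmz⟩
    · obtain ⟨b, hb, hyb⟩ := hyz
      rcases hxy with hxy | ⟨a, ha, m, hm, hxa, hmy⟩
      · exact ⟨b, hb, hxy.trans hyb⟩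
      · exact ⟨a, ha, hxa⟩
    · rcases hxy with hxy | ⟨a, ha, m, hm, hxa, hmy⟩
      · rcases hyz with hyz | ⟨b, hb, n, hn, hyb, hnz⟩
        · exact Or.inl (hxy.trans hyz)
        · exact Or.inr ⟨b, hb, n, hn, hxy.trans hyb, hnz⟩
      · rcases hyz with hyz | ⟨b, hb, n, hn, hyb, hnz⟩
        · exact Or.inr ⟨a, ha, m, hm, hxa, hmy.trans hyz⟩
        · exact Or.inr ⟨a, ha, n, hn, hxa, hnz⟩
end

section
/- Let P be a finite poset, A an antichain of P, M a nonempty subset of A, and let S_M be the set of P-partitions σ of P such that σ(a) ≤ σ(x) for all a ∈ M and all x ∈ A. Then every σ ∈ S_M is constant on M, and the map sending σ ∈ S_M to the map σ' on P(M,A) defined by σ'(u) = σ(u) for u ∈ P∖M and σ'(M) = the common value of σ on M is a bijection from S_M onto the set of P-partitions of P(M,A). -/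
/-- Let `A` be an antichain of a finite poset `P`, `M ⊆ A` nonempty (with
`m₀ ∈ M`), and let `S_M` be the set of `P`-partitions `σ` with `σ a ≤ σ x` for
all `a ∈ M`, `x ∈ A`.  Every `σ ∈ S_M` is constant on `M`, and sending `σ` to
the map `σ'` on `P(M,A)` with `σ'(u) = σ u` for `u ∈ P∖M` and `σ'` of the glued
element equal to the common value of `σ` on `M` is a bijection from `S_M` onto
the set of `P(M,A)`-partitions. -/
theorem ple_partition_bijection {α : Type*} [Fintype α] [PartialOrder α]
    (A M : Finset α) (hA : IsAntichain (· ≤ ·) (A : Set α)) (hMA : M ⊆ A)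
    (m₀ : α) (hm₀ : m₀ ∈ M) :
    (∀ σ : α → ℕ,
      σ ∈ {σ : α → ℕ | (∀ x y : α, x ≤ y → σ y ≤ σ x) ∧ ∀ a ∈ M, ∀ x ∈ A, σ a ≤ σ x} →
      ∀ m ∈ M, ∀ m' ∈ M, σ m = σ m') ∧
    Set.BijOn
      (fun (σ : α → ℕ) (o : Option {u : α // u ∉ M}) =>
        Option.elim o (σ m₀) (fun u => σ u.1))
      {σ : α → ℕ | (∀ x y : α, x ≤ y → σ y ≤ σ x) ∧ ∀ a ∈ M, ∀ x ∈ A, σ a ≤ σ x}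
      {τ : Option {u : α // u ∉ M} → ℕ | ∀ o₁ o₂, pleRel A M o₁ o₂ → τ o₂ ≤ τ o₁} := by
  classical
  have hconst : ∀ σ : α → ℕ, (∀ a ∈ M, ∀ x ∈ A, σ a ≤ σ x) →
      ∀ m ∈ M, ∀ m' ∈ M, σ m = σ m' := fun σ hσ m hm m' hm' =>
    le_antisymm (hσ m hm m' (hMA hm')) (hσ m' hm' m (hMA hm))
  refine ⟨fun σ hσ => hconst σ hσ.2, ?_, ?_, ?_⟩
  · rintro σ ⟨hanti, hmin⟩ (_ | x) (_ | y) h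
    · exact le_rfl
    · obtain ⟨y', hy', hle⟩ := h
      exact (hanti _ _ hle).trans (hmin y' hy' m₀ (hMA hm₀))
    · obtain ⟨x', hx', hle⟩ := h
      exact (hmin m₀ hm₀ x' hx').trans (hanti _ _ hle)
    · obtain hle | ⟨x', hx', y', hy', hxx', hyy'⟩ := h
      · exact hanti _ _ hle
      · exact (hanti _ _ hyy').trans ((hmin y' hy' x' hx').trans (hanti _ _ hxx'))
  · rintro σ ⟨-, hσ⟩ ρ ⟨-, hρ⟩ h
    funext u
    by_cases hu : u ∈ M
    · rw [hconst σ hσ u hu m₀ hm₀, hconst ρ hρ u hu m₀ hm₀]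
      exact congrFun h none
    · exact congrFun h (some ⟨u, hu⟩)
  · intro τ hτ
    refine ⟨fun u => if hu : u ∈ M then τ none else τ (some ⟨u, hu⟩), ⟨?_, ?_⟩, ?_⟩
    · intro x y hxy
      by_cases hx : x ∈ M <;> by_cases hy : y ∈ M <;> simp only [hx, hy, dite_true, dite_false]
      · exact le_rfl
      · exact hτ none (some ⟨y, hy⟩) ⟨x, hx, hxy⟩
      · exact hτ (some ⟨x, hx⟩) none ⟨y, hMA hy, hxy⟩
      · exact hτ (some ⟨x, hx⟩) (some ⟨y, hy⟩) (Or.inl hxy)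
    · intro a ha x hxA
      by_cases hx : x ∈ M <;> simp only [ha, hx, dite_true, dite_false]
      · exact le_rfl
      · exact hτ (some ⟨x, hx⟩) none ⟨x, hxA, le_rfl⟩
    · funext o
      obtain _ | ⟨u, hu⟩ := o
      · simp [hm₀]
      · simp [hu]
end

section
/- Let P be a finite poset, A an antichain of P with |A| ≥ 2, and M a nonempty subset of A. Then the number of nonempty antichains of the partially linear extension P(M,A) is at most (the number of nonempty antichains of P) − 1. -/
open Classical in
/-- The subset of `P` obtained from a subset of `P(M,A)` by replacing the glued element by all
of `M`. -/
noncomputable def unglue {α : Type*} [Fintype α] (M : Finset α)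
    (S : Finset (Option {u : α // u ∉ M})) : Finset α :=
  {a | (∃ h : a ∉ M, some ⟨a, h⟩ ∈ S) ∨ (a ∈ M ∧ none ∈ S)}

section Unglue

variable {α : Type*} [Fintype α] {A M : Finset α} {S : Finset (Option {u : α // u ∉ M})}

theorem mem_unglue {a : α} :
    a ∈ unglue M S ↔ (∃ h : a ∉ M, some ⟨a, h⟩ ∈ S) ∨ (a ∈ M ∧ none ∈ S) := by
  simp [unglue]

theorem mem_unglue_of_mem {a : α} (ha : a ∈ M) : a ∈ unglue M S ↔ none ∈ S := by
  simp [mem_unglue, ha]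

theorem mem_unglue_of_notMem {a : α} (ha : a ∉ M) :
    a ∈ unglue M S ↔ some ⟨a, ha⟩ ∈ S := by
  simp [mem_unglue, ha]

theorem unglue_injective (hM : M.Nonempty) : Function.Injective (unglue M) := by
  intro S T h
  obtain ⟨m, hm⟩ := hM
  ext (_ | ⟨a, ha⟩)
  · rw [← mem_unglue_of_mem hm, h, mem_unglue_of_mem hm]
  · rw [← mem_unglue_of_notMem ha, h, mem_unglue_of_notMem ha]

theorem unglue_nonempty (hM : M.Nonempty) (hS : S.Nonempty) : (unglue M S).Nonempty := by
  obtain ⟨_ | ⟨a, ha⟩, h⟩ := hS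
  · obtain ⟨m, hm⟩ := hM
    exact ⟨m, (mem_unglue_of_mem hm).2 h⟩
  · exact ⟨a, (mem_unglue_of_notMem ha).2 h⟩

theorem isAntichain_unglue [PartialOrder α] (hA : IsAntichain (· ≤ ·) (A : Set α))
    (hMA : M ⊆ A) (hS : IsAntichain (pleRel A M) (S : Set (Option {u : α // u ∉ M}))) :
    IsAntichain (· ≤ ·) (unglue M S : Set α) := by
  intro a ha b hb hab hle
  rw [Finset.mem_coe, mem_unglue] at ha hb
  rcases ha with ⟨ha, haS⟩ | ⟨ha, haS⟩ <;> rcases hb with ⟨hb, hbS⟩ | ⟨hb, hbS⟩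
  · exact hS haS hbS (by simpa using hab) (Or.inl hle)
  · exact hS haS hbS (by simp) ⟨b, hMA hb, hle⟩
  · exact hS haS hbS (by simp) ⟨a, ha, hle⟩
  · exact hA (hMA ha) (hMA hb) hab hle

/-- If `M ≠ A` then `A` itself, and otherwise any singleton in `M`, is an antichain of `P` that
does not come from `P(M,A)`. -/
theorem exists_isAntichain_ne_unglue [PartialOrder α] (hA : IsAntichain (· ≤ ·) (A : Set α))
    (hcard : 2 ≤ A.card) (hMA : M ⊆ A) (hM : M.Nonempty) :
    ∃ T : Finset α, (T.Nonempty ∧ IsAntichain (· ≤ ·) (T : Set α)) ∧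
      ∀ S : Finset (Option {u : α // u ∉ M}),
        IsAntichain (pleRel A M) (S : Set (Option {u : α // u ∉ M})) → unglue M S ≠ T := by
  obtain ⟨m, hm⟩ := hM
  rcases eq_or_ne M A with rfl | hne
  · refine ⟨{m}, ⟨by simp, by simp⟩, fun S _ h => ?_⟩
    obtain ⟨n, hn, hnm⟩ := Finset.exists_mem_ne hcard m
    have hnone : none ∈ S := (mem_unglue_of_mem hm).1 (by simp [h])
    have hmem := (mem_unglue_of_mem hn).2 hnone
    rw [h, Finset.mem_singleton] at hmem
    exact hnm hmem
  · refine ⟨A, ⟨⟨m, hMA hm⟩, hA⟩, fun S hS h => ?_⟩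
    obtain ⟨a, haA, haM⟩ := Finset.exists_of_ssubset (hMA.ssubset_of_ne hne)
    have hnone : none ∈ S := (mem_unglue_of_mem hm).1 (h ▸ hMA hm)
    have hsome : some ⟨a, haM⟩ ∈ S := (mem_unglue_of_notMem haM).1 (h ▸ haA)
    exact hS hsome hnone (by simp) ⟨a, haA, le_rfl⟩

end Unglue

/-- For an antichain `A` with `|A| ≥ 2` of a finite poset `P` and a nonempty
`M ⊆ A`, the partially linear extension `P(M,A)` has at least one nonempty
antichain fewer than `P`. -/
theorem antichains_ple {α : Type*} [Fintype α] [PartialOrder α]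
    (A M : Finset α) (hA : IsAntichain (· ≤ ·) (A : Set α)) (hcard : 2 ≤ A.card)
    (hMA : M ⊆ A) (hM : M.Nonempty) :
    {S : Finset (Option {u : α // u ∉ M}) |
        S.Nonempty ∧ IsAntichain (pleRel A M) (S : Set (Option {u : α // u ∉ M}))}.ncard ≤
      {S : Finset α | S.Nonempty ∧ IsAntichain (· ≤ ·) (S : Set α)}.ncard - 1 := by
  obtain ⟨T, hT, hTne⟩ := exists_isAntichain_ne_unglue hA hcard hMA hM
  rw [← Set.ncard_sdiff_singleton_of_mem (a := T) hT]
  refine Set.ncard_le_ncard_of_injOn (unglue M) ?_ (unglue_injective hM).injOn (Set.toFinite _)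
  rintro S ⟨hne, hS⟩
  exact ⟨⟨unglue_nonempty hM hne, isAntichain_unglue hA hMA hS⟩, hTne S hS⟩
end

section
/- Define a step from a finite poset P to a finite poset Q to hold if either Q is order-isomorphic to the induced subposet P∖{b} for some removable element b of P, or Q is order-isomorphic to the partially linear extension P(M,A) for some antichain A of P and some nonempty M ⊆ A. Then every finite poset can be reduced to the empty poset by finitely many steps: for every finite poset P there is a finite sequence P = P_0, P_1, ..., P_k with P_k empty such that a step holds from P_i to P_{i+1} for each 0 ≤ i < k. -/
/-- A finite poset: a partial order on `Fin n`. -/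
structure FinPoset where
  n : ℕ
  le : Fin n → Fin n → Prop
  le_refl : ∀ a, le a a
  le_antisymm : ∀ a b, le a b → le b a → a = b
  le_trans : ∀ a b c, le a b → le b c → le a c

namespace FinPoset

/-- The strict order of a finite poset. -/
def lt (P : FinPoset) (a b : Fin P.n) : Prop := P.le a b ∧ a ≠ b

/-- `b` covers `a`: `a < b` and no element lies strictly between them. -/
def covers (P : FinPoset) (a b : Fin P.n) : Prop :=
  P.lt a b ∧ ¬ ∃ c, P.lt a c ∧ P.lt c b

/-- `b` is removable: it covers at most one element and is covered by at most
one element. -/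
def Removable (P : FinPoset) (b : Fin P.n) : Prop :=
  {x | P.covers x b}.Subsingleton ∧ {x | P.covers b x}.Subsingleton

/-- `A` is an antichain of `P`. -/
def IsAntichain' (P : FinPoset) (A : Finset (Fin P.n)) : Prop :=
  ∀ x ∈ A, ∀ y ∈ A, x ≠ y → ¬ P.le x y

/-- The relation of the partially linear extension `P(M,A)`, on the set
`(P∖M) ∪ {M}` where the glued element `M` is represented by `none`. -/
def pleRel (P : FinPoset) (A M : Finset (Fin P.n)) :
    Option {u : Fin P.n // u ∉ M} → Option {u : Fin P.n // u ∉ M} → Prop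
  | some x, some y => P.le x.1 y.1 ∨ ∃ x' ∈ A, ∃ y' ∈ M, P.le x.1 x' ∧ P.le y' y.1
  | some x, none => ∃ x' ∈ A, P.le x.1 x'
  | none, some y => ∃ y' ∈ M, P.le y' y.1
  | none, none => True

/-- A step from `P` to `Q`: either `Q` is order-isomorphic to the induced
subposet `P∖{b}` for some removable element `b` of `P`, or `Q` is
order-isomorphic to the partially linear extension `P(M,A)` for some antichain
`A` of `P` and some nonempty `M ⊆ A`. -/
def Step (P Q : FinPoset) : Prop :=
  (∃ b : Fin P.n, P.Removable b ∧
    ∃ e : Fin Q.n ≃ {u : Fin P.n // u ≠ b},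
      ∀ a a' : Fin Q.n, Q.le a a' ↔ P.le (e a).1 (e a').1) ∨
  (∃ A M : Finset (Fin P.n), P.IsAntichain' A ∧ M ⊆ A ∧ M.Nonempty ∧
    ∃ e : Fin Q.n ≃ Option {u : Fin P.n // u ∉ M},
      ∀ a a' : Fin Q.n, Q.le a a' ↔ P.pleRel A M (e a) (e a'))

end FinPoset

namespace FinPoset

theorem pleRel_self_refl (P : FinPoset) (A : Finset (Fin P.n)) (a) : P.pleRel A A a a := by
  rcases a with _ | a
  · trivial
  · exact Or.inl (P.le_refl _)

theorem IsAntichain'.eq_of_le {P : FinPoset} {A : Finset (Fin P.n)} (hA : P.IsAntichain' A)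
    {x y : Fin P.n} (hx : x ∈ A) (hy : y ∈ A) (h : P.le x y) : x = y := by
  by_contra hne
  exact hA x hx y hy hne h

theorem IsAntichain'.pleRel_self_antisymm {P : FinPoset} {A : Finset (Fin P.n)}
    (hA : P.IsAntichain' A) (a b) (hab : P.pleRel A A a b) (hba : P.pleRel A A b a) : a = b := by
  have squeeze : ∀ {x y z : Fin P.n}, x ∈ A → z ∈ A → P.le x y → P.le y z → y ∈ A := by
    intro x y z hx hz hxy hyz
    obtain rfl := hA.eq_of_le hx hz (P.le_trans _ _ _ hxy hyz)
    rwa [P.le_antisymm _ _ hyz hxy]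
  rcases a with _ | ⟨a, ha⟩ <;> rcases b with _ | ⟨b, hb⟩
  · rfl
  · obtain ⟨x, hx, hxb⟩ := hab
    obtain ⟨y, hy, hby⟩ := hba
    exact absurd (squeeze hx hy hxb hby) hb
  · obtain ⟨x, hx, hax⟩ := hab
    obtain ⟨y, hy, hya⟩ := hba
    exact absurd (squeeze hy hx hya hax) ha
  · rcases hab with hab | ⟨x, hx, y, hy, hax, hyb⟩ <;>
      rcases hba with hba | ⟨u, hu, v, hv, hbu, hva⟩
    · obtain rfl := P.le_antisymm _ _ hab hba
      rfl
    · exact absurd (squeeze hv hu hva (P.le_trans _ _ _ hab hbu)) ha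
    · exact absurd (squeeze hy hx hyb (P.le_trans _ _ _ hba hax)) hb
    · exact absurd (squeeze hy hu hyb hbu) hb

theorem pleRel_self_trans (P : FinPoset) (A : Finset (Fin P.n)) (a b c)
    (hab : P.pleRel A A a b) (hbc : P.pleRel A A b c) :
    P.pleRel A A a c := by
  rcases a with _ | a <;> rcases b with _ | b <;> rcases c with _ | c
  · trivial
  · exact hbc
  · trivial
  · obtain ⟨x, hx, hxb⟩ := hab
    rcases hbc with hbc | ⟨u, hu, v, hv, hbu, hvc⟩
    · exact ⟨x, hx, P.le_trans _ _ _ hxb hbc⟩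
    · exact ⟨v, hv, hvc⟩
  · exact hab
  · obtain ⟨x, hx, hax⟩ := hab
    obtain ⟨y, hy, hyc⟩ := hbc
    exact Or.inr ⟨x, hx, y, hy, hax, hyc⟩
  · obtain ⟨u, hu, hbu⟩ := hbc
    rcases hab with hab | ⟨x, hx, y, hy, hax, hyb⟩
    · exact ⟨u, hu, P.le_trans _ _ _ hab hbu⟩
    · exact ⟨x, hx, hax⟩
  · rcases hab with hab | ⟨x, hx, y, hy, hax, hyb⟩ <;>
      rcases hbc with hbc | ⟨u, hu, v, hv, hbu, hvc⟩
    · exact Or.inl (P.le_trans _ _ _ hab hbc)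
    · exact Or.inr ⟨u, hu, v, hv, P.le_trans _ _ _ hab hbu, hvc⟩
    · exact Or.inr ⟨x, hx, y, hy, hax, P.le_trans _ _ _ hyb hbc⟩
    · exact Or.inr ⟨x, hx, v, hv, hax, hvc⟩

/-- Every partial order on a finite type is isomorphic to some `FinPoset`. -/
theorem exists_equiv_of_fintype {α : Type*} [Fintype α] (r : α → α → Prop) (hrefl : ∀ a, r a a)
    (hanti : ∀ a b, r a b → r b a → a = b) (htrans : ∀ a b c, r a b → r b c → r a c) :
    ∃ Q : FinPoset, Q.n = Fintype.card α ∧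
      ∃ e : Fin Q.n ≃ α, ∀ a b, Q.le a b ↔ r (e a) (e b) :=
  let e := (Fintype.equivFin α).symm
  ⟨{ n := Fintype.card α
     le := fun a b => r (e a) (e b)
     le_refl := fun _ => hrefl _
     le_antisymm := fun _ _ hab hba => e.injective (hanti _ _ hab hba)
     le_trans := fun _ _ _ => htrans _ _ _ }, rfl, e, fun _ _ => Iff.rfl⟩

/-- In a totally ordered poset every element is removable. -/
theorem removable_of_total {P : FinPoset} (htot : ∀ x y, P.le x y ∨ P.le y x) (b : Fin P.n) :
    P.Removable b := by
  constructor
  · intro x hx y hy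
    by_contra hne
    rcases htot x y with h | h
    · exact hx.2 ⟨y, ⟨h, hne⟩, hy.1⟩
    · exact hy.2 ⟨x, ⟨h, Ne.symm hne⟩, hx.1⟩
  · intro x hx y hy
    by_contra hne
    rcases htot x y with h | h
    · exact hy.2 ⟨x, hx.1, ⟨h, hne⟩⟩
    · exact hx.2 ⟨y, hy.1, ⟨h, Ne.symm hne⟩⟩

/-- Deleting an element of a chain, or collapsing two incomparable elements, yields a smaller
poset. -/
theorem exists_step_lt (P : FinPoset) (hP : P.n ≠ 0) : ∃ Q : FinPoset, P.Step Q ∧ Q.n < P.n := by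
  classical
  by_cases htot : ∀ x y, P.le x y ∨ P.le y x
  · let b : Fin P.n := ⟨0, Nat.pos_of_ne_zero hP⟩
    obtain ⟨Q, hQ, hiso⟩ := exists_equiv_of_fintype
      (fun x y : {u : Fin P.n // u ≠ b} => P.le x.1 y.1) (fun _ => P.le_refl _)
      (fun _ _ hab hba => Subtype.ext (P.le_antisymm _ _ hab hba)) (fun _ _ _ => P.le_trans _ _ _)
    refine ⟨Q, Or.inl ⟨b, removable_of_total htot b, hiso⟩, ?_⟩
    rw [hQ]
    simpa using Nat.pos_of_ne_zero hP
  · push Not at htot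
    obtain ⟨x, y, hxy, hyx⟩ := htot
    have hne : x ≠ y := fun h => hxy (h ▸ P.le_refl x)
    have hA : P.IsAntichain' {x, y} := by
      intro u hu v hv huv
      simp only [Finset.mem_insert, Finset.mem_singleton] at hu hv
      rcases hu with rfl | rfl <;> rcases hv with rfl | rfl <;>
        first | assumption | exact absurd rfl huv
    obtain ⟨Q, hQ, hiso⟩ := exists_equiv_of_fintype (P.pleRel {x, y} {x, y})
      (P.pleRel_self_refl _) hA.pleRel_self_antisymm (P.pleRel_self_trans _)
    refine ⟨Q, Or.inr ⟨{x, y}, {x, y}, hA, subset_rfl, ⟨x, by simp⟩, hiso⟩, ?_⟩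
    have hcard : ({x, y} : Finset (Fin P.n)).card ≤ P.n := by
      simpa using Finset.card_le_univ ({x, y} : Finset (Fin P.n))
    rw [hQ, Fintype.card_option, Fintype.card_subtype_compl, Fintype.card_coe, Fintype.card_fin]
    rw [Finset.card_pair hne] at hcard ⊢
    omega

end FinPoset

/-- Every finite poset can be reduced to the empty poset by finitely many
deletions and partially linear extensions. -/
theorem reduction_to_empty (P : FinPoset) :
    ∃ (k : ℕ) (Ps : Fin (k + 1) → FinPoset),
      Ps 0 = P ∧ (Ps (Fin.last k)).n = 0 ∧
      ∀ i : Fin k, FinPoset.Step (Ps i.castSucc) (Ps i.succ) := by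
  induction hn : P.n using Nat.strong_induction_on generalizing P with
  | _ n ih =>
    by_cases h0 : P.n = 0
    · exact ⟨0, fun _ => P, rfl, h0, fun i => i.elim0⟩
    · obtain ⟨Q, hstep, hlt⟩ := P.exists_step_lt h0
      obtain ⟨k, Ps, hzero, hlast, hsteps⟩ := ih Q.n (hn ▸ hlt) Q rfl
      refine ⟨k + 1, Fin.cons P Ps, rfl, ?_, fun i => ?_⟩
      · rw [← Fin.succ_last, Fin.cons_succ]
        exact hlast
      · induction i using Fin.cases with
        | zero => simpa [hzero] using hstep
        | succ j => simpa [← Fin.succ_castSucc] using hsteps j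
end

section
/- Let P, Q, S be posets, R₁ ⊆ P × Q and R₂ ⊆ Q × S. View R₂ as a subset of (P ⊕_{R₁} Q) × S via the inclusion of Q into the disjoint union, and view R₁ as a subset of P × (Q ⊕_{R₂} S) via the inclusion of Q into the disjoint union. Then the identity map on the disjoint union of P, Q, S is an order isomorphism (P ⊕_{R₁} Q) ⊕_{R₂} S ≅ P ⊕_{R₁} (Q ⊕_{R₂} S); i.e. the partially ordinal sum is associative. -/
/-- The relation of the partially ordinal sum `P ⊕_R Q` on the disjoint union
of `P` and `Q`, where `P` carries the relation `lp` and `Q` the relation `lq`. -/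
def osumRel {α β : Type*} (lp : α → α → Prop) (lq : β → β → Prop) (R : Set (α × β)) :
    α ⊕ β → α ⊕ β → Prop
  | Sum.inl x, Sum.inl y => lp x y
  | Sum.inr x, Sum.inr y => lq x y
  | Sum.inl x, Sum.inr y => ∃ r ∈ R, lp x r.1 ∧ lq r.2 y
  | Sum.inr _, Sum.inl _ => False

/-- Associativity of the partially ordinal sum: for posets `P, Q, S`,
`R₁ ⊆ P × Q` and `R₂ ⊆ Q × S`, viewing `R₂ ⊆ (P ⊕_{R₁} Q) × S` and
`R₁ ⊆ P × (Q ⊕_{R₂} S)` via the inclusions of `Q`, the identity map of the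
disjoint union (i.e. `Equiv.sumAssoc`) is an order isomorphism
`(P ⊕_{R₁} Q) ⊕_{R₂} S ≅ P ⊕_{R₁} (Q ⊕_{R₂} S)`. -/
theorem osum_assoc {α β γ : Type*} [PartialOrder α] [PartialOrder β] [PartialOrder γ]
    (R₁ : Set (α × β)) (R₂ : Set (β × γ)) :
    ∀ x y : (α ⊕ β) ⊕ γ,
      osumRel (osumRel (· ≤ ·) (· ≤ ·) R₁) (· ≤ ·)
          ((fun p : β × γ => ((Sum.inr p.1 : α ⊕ β), p.2)) '' R₂) x y ↔
        osumRel (· ≤ ·) (osumRel (· ≤ ·) (· ≤ ·) R₂)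
          ((fun p : α × β => (p.1, (Sum.inl p.2 : β ⊕ γ))) '' R₁)
          (Equiv.sumAssoc α β γ x) (Equiv.sumAssoc α β γ y) := by
  rintro ((a | b) | c) ((a₀ | b₀) | c₀) <;>
    simp only [osumRel, Equiv.sumAssoc_apply_inl_inl, Equiv.sumAssoc_apply_inl_inr,
      Equiv.sumAssoc_apply_inr, Set.exists_mem_image]
  constructor
  · rintro ⟨r₂, h₂, ⟨r₁, h₁, ha, hb⟩, hc⟩
    exact ⟨r₁, h₁, ha, r₂, h₂, hb, hc⟩
  · rintro ⟨r₁, h₁, ha, r₂, h₂, hb, hc⟩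
    exact ⟨r₂, h₂, ⟨r₁, h₁, ha, hb⟩, hc⟩
end

section
/- Let C be a nonempty finite chain, P a finite poset, and R' ⊆ C × P. If no element of C is removable in the partially ordinal sum C ⊕_{R'} P, then |C| < |P|. -/
/-- `b` covers `a` with respect to the relation `r`: `a` is strictly below `b`
and nothing is strictly between them. -/
def relCovBy {γ : Type*} (r : γ → γ → Prop) (a b : γ) : Prop :=
  (r a b ∧ a ≠ b) ∧ ¬ ∃ c, (r a c ∧ a ≠ c) ∧ (r c b ∧ c ≠ b)

/-- `b` is removable with respect to the relation `r`: it covers at most one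
element and is covered by at most one element. -/
def relRemovable {γ : Type*} (r : γ → γ → Prop) (b : γ) : Prop :=
  {x | relCovBy r x b}.Subsingleton ∧ {x | relCovBy r b x}.Subsingleton

section ChainSum

variable {C P : Type*} [LinearOrder C] [PartialOrder P] {R : Set (C × P)}

/-- In a partially ordinal sum over a chain, elements of the chain cover at most one element. -/
lemma subsingleton_relCovBy_inl (c : C) :
    {x | relCovBy (osumRel (· ≤ ·) (· ≤ ·) R) x (Sum.inl c)}.Subsingleton := by
  rintro (a | a) ⟨⟨ha, hac⟩, ha'⟩ (b | b) ⟨⟨hb, hbc⟩, hb'⟩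
  · rcases lt_trichotomy a b with hab | rfl | hab
    · exact (ha' ⟨Sum.inl b, ⟨hab.le, by simpa using hab.ne⟩, hb, hbc⟩).elim
    · rfl
    · exact (hb' ⟨Sum.inl a, ⟨hab.le, by simpa using hab.ne⟩, ha, hac⟩).elim
  · exact hb.elim
  · exact ha.elim
  · exact ha.elim

/-- At most one upper cover of a chain element lies in the chain. -/
lemma eq_of_relCovBy_inl_inl {c a b : C}
    (ha : relCovBy (osumRel (· ≤ ·) (· ≤ ·) R) (Sum.inl c) (Sum.inl a))
    (hb : relCovBy (osumRel (· ≤ ·) (· ≤ ·) R) (Sum.inl c) (Sum.inl b)) : a = b := by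
  rcases lt_trichotomy a b with hab | hab | hab
  · exact (hb.2 ⟨Sum.inl a, ha.1, hab.le, by simpa using hab.ne⟩).elim
  · exact hab
  · exact (ha.2 ⟨Sum.inl b, hb.1, hab.le, by simpa using hab.ne⟩).elim

/-- An element of the upper summand covers at most one element of the chain. -/
lemma eq_of_relCovBy_inl_inr {a b : C} {p : P}
    (ha : relCovBy (osumRel (· ≤ ·) (· ≤ ·) R) (Sum.inl a) (Sum.inr p))
    (hb : relCovBy (osumRel (· ≤ ·) (· ≤ ·) R) (Sum.inl b) (Sum.inr p)) : a = b := by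
  rcases lt_trichotomy a b with hab | hab | hab
  · exact (ha.2 ⟨Sum.inl b, ⟨hab.le, by simpa using hab.ne⟩, hb.1⟩).elim
  · exact hab
  · exact (hb.2 ⟨Sum.inl a, ⟨hab.le, by simpa using hab.ne⟩, ha.1⟩).elim

/-- A chain element that is not removable has two distinct upper covers. -/
lemma exists_ne_relCovBy_of_not_removable {c : C}
    (h : ¬ relRemovable (osumRel (· ≤ ·) (· ≤ ·) R) (Sum.inl c)) :
    ∃ x y, relCovBy (osumRel (· ≤ ·) (· ≤ ·) R) (Sum.inl c) x ∧
      relCovBy (osumRel (· ≤ ·) (· ≤ ·) R) (Sum.inl c) y ∧ x ≠ y := by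
  by_contra! hxy
  exact h ⟨subsingleton_relCovBy_inl c, fun x hx y hy => hxy x y hx hy⟩

/-- A chain element that is not removable is covered by an element of the upper summand. -/
lemma exists_relCovBy_inr_of_not_removable {c : C}
    (h : ¬ relRemovable (osumRel (· ≤ ·) (· ≤ ·) R) (Sum.inl c)) :
    ∃ p, relCovBy (osumRel (· ≤ ·) (· ≤ ·) R) (Sum.inl c) (Sum.inr p) := by
  obtain ⟨x | x, y | y, hx, hy, hxy⟩ := exists_ne_relCovBy_of_not_removable h
  · exact (hxy (congrArg Sum.inl (eq_of_relCovBy_inl_inl hx hy))).elim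
  · exact ⟨y, hy⟩
  · exact ⟨x, hx⟩
  · exact ⟨x, hx⟩

/-- No chain element covers a maximal element of the chain. -/
lemma not_relCovBy_inl_inl_of_isMax {m a : C} (hm : IsMax m) :
    ¬ relCovBy (osumRel (· ≤ ·) (· ≤ ·) R) (Sum.inl m) (Sum.inl a) := fun ha =>
  ha.1.2 (congrArg Sum.inl (hm.eq_of_le ha.1.1))

/-- If the maximum of the chain is not removable, it has two upper covers in the upper summand. -/
lemma exists_ne_relCovBy_inr_of_isMax {m : C} (hm : IsMax m)
    (h : ¬ relRemovable (osumRel (· ≤ ·) (· ≤ ·) R) (Sum.inl m)) :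
    ∃ p q, relCovBy (osumRel (· ≤ ·) (· ≤ ·) R) (Sum.inl m) (Sum.inr p) ∧
      relCovBy (osumRel (· ≤ ·) (· ≤ ·) R) (Sum.inl m) (Sum.inr q) ∧ p ≠ q := by
  obtain ⟨x | x, y | y, hx, hy, hxy⟩ := exists_ne_relCovBy_of_not_removable h
  · exact (not_relCovBy_inl_inl_of_isMax hm hx).elim
  · exact (not_relCovBy_inl_inl_of_isMax hm hx).elim
  · exact (not_relCovBy_inl_inl_of_isMax hm hy).elim
  · exact ⟨x, y, hx, hy, fun hxy' => hxy (congrArg Sum.inr hxy')⟩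

end ChainSum

/-- If `C` is a nonempty finite chain, `P` a finite poset and `R' ⊆ C × P` is
such that no element of `C` is removable in the partially ordinal sum
`C ⊕_{R'} P`, then `|C| < |P|`. -/
theorem card_lt_of_no_removable {C P : Type*} [Fintype C] [LinearOrder C] [Nonempty C]
    [Fintype P] [PartialOrder P] (R' : Set (C × P))
    (h : ∀ c : C, ¬ relRemovable (osumRel (· ≤ ·) (· ≤ ·) R') (Sum.inl c)) :
    Fintype.card C < Fintype.card P := by
  choose f hf using fun c => exists_relCovBy_inr_of_not_removable (h c)
  refine Fintype.card_lt_of_injective_not_surjective f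
    (fun a b hab => eq_of_relCovBy_inl_inr (hf a) (hab ▸ hf b)) fun hsurj => ?_
  obtain ⟨m, hm⟩ := Finite.exists_max (id : C → C)
  obtain ⟨p, q, hp, hq, hpq⟩ :=
    exists_ne_relCovBy_inr_of_isMax (fun a _ => hm a : IsMax m) (h m)
  obtain ⟨a, rfl⟩ := hsurj p
  obtain ⟨b, rfl⟩ := hsurj q
  exact hpq (congrArg f
    ((eq_of_relCovBy_inl_inr (hf a) hp).trans (eq_of_relCovBy_inl_inr hq (hf b))))
end

section
/- Let D be the Diamond poset. Then f_D · (1 − x₁)(1 − x₁x₂)(1 − x₁x₃)(1 − x₁x₂x₃)(1 − x₁x₂x₃x₄) = 1 − x₁²x₂x₃ as an identity of formal power series in ℤ[[x₁, x₂, x₃, x₄]]. -/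
open MvPowerSeries

open Classical in
/-- The order of the Diamond poset on `{1,2,3,4}` (here represented by
`Fin 4 = {0,1,2,3}`): `1 < 2 < 4`, `1 < 3 < 4`, with `2` and `3` incomparable. -/
def diamondLe (x y : Fin 4) : Prop := x = y ∨ x = 0 ∨ y = 3

open Classical in
/-- The generating function of `D`-partitions of the Diamond poset, in the
variables `x₁, x₂, x₃, x₄` (represented by `X 0, X 1, X 2, X 3`). -/
noncomputable def fD : MvPowerSeries (Fin 4) ℤ :=
  fun d => if ∀ x y : Fin 4, diamondLe x y → d y ≤ d x then 1 else 0

/-- The power series in four variables whose coefficients are given by `F`. -/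
def seriesOfCoeffs (F : ℕ → ℕ → ℕ → ℕ → ℤ) : MvPowerSeries (Fin 4) ℤ :=
  fun d => F (d 0) (d 1) (d 2) (d 3)

theorem monomial_eq_X_pow_mul (e : Fin 4 →₀ ℕ) :
    (monomial e 1 : MvPowerSeries (Fin 4) ℤ) =
      X 0 ^ e 0 * X 1 ^ e 1 * X 2 ^ e 2 * X 3 ^ e 3 := by
  simp only [X_pow_eq, monomial_mul_monomial, mul_one]
  congr 2
  ext i
  fin_cases i <;> simp

theorem seriesOfCoeffs_mul_one_sub {F G : ℕ → ℕ → ℕ → ℕ → ℤ} {m : MvPowerSeries (Fin 4) ℤ}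
    (p q r s : ℕ) (hm : m = X 0 ^ p * X 1 ^ q * X 2 ^ r * X 3 ^ s)
    (h : ∀ a b c d, G a b c d = F a b c d -
      if p ≤ a ∧ q ≤ b ∧ r ≤ c ∧ s ≤ d then F (a - p) (b - q) (c - r) (d - s) else 0) :
    seriesOfCoeffs F * (1 - m) = seriesOfCoeffs G := by
  classical
  have he := monomial_eq_X_pow_mul (Finsupp.equivFunOnFinite.symm ![p, q, r, s])
  simp only [Finsupp.equivFunOnFinite_symm_apply_apply, Matrix.cons_val] at he
  rw [hm, ← he]
  ext d
  rw [mul_sub, mul_one, map_sub, coeff_mul_monomial, mul_one]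
  simp only [coeff_apply, seriesOfCoeffs, h, Finsupp.le_def, Fin.forall_fin_succ]
  simp

theorem fD_eq_seriesOfCoeffs :
    fD = seriesOfCoeffs fun a b c d => if d ≤ b ∧ d ≤ c ∧ b ≤ a ∧ c ≤ a then 1 else 0 := by
  ext d
  simp only [coeff_apply, fD, seriesOfCoeffs]
  congr 1
  simp only [diamondLe, Fin.forall_fin_succ, eq_iff_iff]
  simp
  omega

theorem fD_mul_one_sub_X :
    fD * (1 - X 0) =
      seriesOfCoeffs fun a b c d => if d ≤ b ∧ d ≤ c ∧ a = max b c then 1 else 0 := by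
  rw [fD_eq_seriesOfCoeffs]
  refine seriesOfCoeffs_mul_one_sub 1 0 0 0 (by simp) fun a b c d => ?_
  grind

theorem seriesOfCoeffs_sup_mul_one_sub :
    (seriesOfCoeffs fun a b c d => if d ≤ b ∧ d ≤ c ∧ a = max b c then 1 else 0) *
        (1 - X 0 * X 1 * X 2 * X 3) =
      seriesOfCoeffs fun a b c d => if d = 0 ∧ a = max b c then 1 else 0 := by
  refine seriesOfCoeffs_mul_one_sub 1 1 1 1 (by simp) fun a b c d => ?_
  grind

theorem seriesOfCoeffs_sup_bot_mul_one_sub :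
    (seriesOfCoeffs fun a b c d => if d = 0 ∧ a = max b c then 1 else 0) *
        (1 - X 0 * X 1 * X 2) =
      seriesOfCoeffs fun a b c d =>
        if d = 0 ∧ a = max b c ∧ min b c = 0 then 1 else 0 := by
  refine seriesOfCoeffs_mul_one_sub 1 1 1 0 (by simp) fun a b c d => ?_
  grind

theorem seriesOfCoeffs_disjoint_mul_one_sub :
    (seriesOfCoeffs fun a b c d => if d = 0 ∧ a = max b c ∧ min b c = 0 then 1 else 0) *
        (1 - X 0 * X 1) =
      seriesOfCoeffs fun a b c d =>
        if d = 0 ∧ b = 0 ∧ a = c then 1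
        else if d = 0 ∧ b = 1 ∧ a = c + 1 ∧ 1 ≤ c then -1 else 0 := by
  refine seriesOfCoeffs_mul_one_sub 1 1 0 0 (by simp) fun a b c d => ?_
  grind

theorem one_eq_seriesOfCoeffs :
    (1 : MvPowerSeries (Fin 4) ℤ) =
      seriesOfCoeffs fun a b c d => if d = 0 ∧ b = 0 ∧ a = 0 ∧ c = 0 then 1 else 0 := by
  classical
  ext d
  rw [coeff_one]
  simp only [coeff_apply, seriesOfCoeffs]
  congr 1
  simp only [Finsupp.ext_iff, Fin.forall_fin_succ, eq_iff_iff]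
  simp
  omega

theorem one_sub_eq_seriesOfCoeffs :
    (1 - X 0 ^ 2 * X 1 * X 2 : MvPowerSeries (Fin 4) ℤ) =
      seriesOfCoeffs fun a b c d =>
        if d = 0 ∧ b = 0 ∧ a = 0 ∧ c = 0 then 1
        else if d = 0 ∧ b = 1 ∧ a = 2 ∧ c = 1 then -1 else 0 := by
  rw [← one_mul (1 - _)]
  nth_rw 1 [one_eq_seriesOfCoeffs]
  refine seriesOfCoeffs_mul_one_sub 2 1 1 0 (by simp) fun a b c d => ?_
  grind

theorem seriesOfCoeffs_line_mul_one_sub :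
    (seriesOfCoeffs fun a b c d =>
        if d = 0 ∧ b = 0 ∧ a = c then 1
        else if d = 0 ∧ b = 1 ∧ a = c + 1 ∧ 1 ≤ c then -1 else 0) *
        (1 - X 0 * X 2) =
      1 - X 0 ^ 2 * X 1 * X 2 := by
  rw [one_sub_eq_seriesOfCoeffs]
  refine seriesOfCoeffs_mul_one_sub 1 0 1 0 (by simp) fun a b c d => ?_
  split_ifs <;> omega

/-- `f_D (1-x₁)(1-x₁x₂)(1-x₁x₃)(1-x₁x₂x₃)(1-x₁x₂x₃x₄) = 1 - x₁²x₂x₃`. -/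
theorem diamond_gf :
    fD * (1 - X 0) * (1 - X 0 * X 1) * (1 - X 0 * X 2) * (1 - X 0 * X 1 * X 2) *
        (1 - X 0 * X 1 * X 2 * X 3) =
      1 - X 0 ^ 2 * X 1 * X 2 := by
  rw [← seriesOfCoeffs_line_mul_one_sub, ← seriesOfCoeffs_disjoint_mul_one_sub,
    ← seriesOfCoeffs_sup_bot_mul_one_sub, ← seriesOfCoeffs_sup_mul_one_sub, ← fD_mul_one_sub_X]
  ring
end

section
/- For n ≥ 3, the 2-rowed posets with double diagonals satisfy the recurrence (1 − x₁)(1 − x₁x₂)(1 − x₁x₃) · f_{P_n} = (1 − x₁²x₂x₃) · G, where G is obtained from f_{P_{n−1}} (a power series in variables y₁, ..., y_{2n−2} indexed by the elements of P_{n−1}) by substituting the monomial x₁x₂x₃ for y₁ and the variable x_{j+2} for y_j for each 2 ≤ j ≤ 2n−2; this is an identity of multivariate formal power series over ℤ in the variables x₁, ..., x_{2n}. -/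
open MvPowerSeries

open Classical in
/-- The generating relations of the 2-rowed poset with double diagonals `P_n`,
on the labels `1, …, 2n` (as natural numbers): `1 < 2`, `1 < 3`;
`2k < 2k+2`, `2k < 2k+3`, `2k+1 < 2k+2`, `2k+1 < 2k+3` for `1 ≤ k ≤ n-2`;
and `2n-2 < 2n`, `2n-1 < 2n`. -/
def prel (n : ℕ) (i j : ℕ) : Prop :=
  (i = 1 ∧ (j = 2 ∨ j = 3)) ∨
  (∃ k, 1 ≤ k ∧ k ≤ n - 2 ∧ (i = 2 * k ∨ i = 2 * k + 1) ∧
    (j = 2 * k + 2 ∨ j = 2 * k + 3)) ∨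
  ((i = 2 * n - 2 ∨ i = 2 * n - 1) ∧ j = 2 * n)

/-- The order of `P_n` generated by the relations `prel n`. -/
def pOrd (n : ℕ) : ℕ → ℕ → Prop := Relation.ReflTransGen (prel n)

open Classical in
/-- The generating function of `P_n`-partitions of `P_n`, as a series in the
variables `x_1, …, x_{2n}`: the coefficient at an exponent vector `d` is `1`
iff `d` is supported on `{1, …, 2n}` and is order-reversing. -/
noncomputable def fP (n : ℕ) : MvPowerSeries ℕ ℤ :=
  fun d => if (∀ m, m ∉ Finset.Icc 1 (2 * n) → d m = 0) ∧
      (∀ i j, pOrd n i j → d j ≤ d i) then 1 else 0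

open Classical in
/-- The series obtained from `f_{P_{n-1}}` (a series in the variables
`y_1, …, y_{2n-2}`) by substituting the monomial `x₁x₂x₃` for `y₁` and the
variable `x_{j+2}` for `y_j` for `2 ≤ j ≤ 2n-2`.  The substitution sends the
monomial `∏_j y_j^{d j}` to `(x₁x₂x₃)^{d 1} ∏_{j ≥ 2} x_{j+2}^{d j}`, so the
coefficient at an exponent vector `e` is `1` iff `e` is supported on
`{1, …, 2n}`, `e 1 = e 2 = e 3`, and the recovered exponent vector
(`d 1 = e 1`, `d j = e (j+2)` for `j ≠ 1`) is order-reversing for `P_{n-1}`. -/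
noncomputable def fPsub (n : ℕ) : MvPowerSeries ℕ ℤ :=
  fun e => if (∀ m, m ∉ Finset.Icc 1 (2 * n) → e m = 0) ∧ e 1 = e 2 ∧ e 2 = e 3 ∧
      (∀ i j, pOrd (n - 1) i j →
        (if j = 1 then e 1 else e (j + 2)) ≤ (if i = 1 then e 1 else e (i + 2)))
    then 1 else 0

lemma forall_pOrd_iff (n : ℕ) (g : ℕ → ℕ) :
    (∀ i j, pOrd n i j → g j ≤ g i) ↔ ∀ i j, prel n i j → g j ≤ g i := by
  refine ⟨fun h i j hij => h i j (Relation.ReflTransGen.single hij), fun h i j hij => ?_⟩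
  induction hij with
  | refl => exact le_rfl
  | tail _ hbc ih => exact (h _ _ hbc).trans ih

/-- The conditions on a `P_n`-partition `d` that do not involve the elements `1, 2, 3`. -/
def IsTailPartition (n : ℕ) (d : ℕ →₀ ℕ) : Prop :=
  (∀ m, m ∉ Finset.Icc 1 (2 * n) → d m = 0) ∧ ∀ i j, 4 ≤ i → prel n i j → d j ≤ d i

lemma IsTailPartition.congr {n : ℕ} (hn : 3 ≤ n) {d e : ℕ →₀ ℕ}
    (h : ∀ m, m ≠ 1 → m ≠ 2 → m ≠ 3 → d m = e m) (hd : IsTailPartition n d) :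
    IsTailPartition n e := by
  refine ⟨fun m hm => ?_, fun i j hi hij => ?_⟩
  · have hd' := hd.1 m hm
    rw [Finset.mem_Icc] at hm
    rw [← h m (by omega) (by omega) (by omega), hd']
  · have hj : 4 ≤ j := by
      rcases hij with hij | ⟨k, hij⟩ | hij <;> omega
    rw [← h i (by omega) (by omega) (by omega), ← h j (by omega) (by omega) (by omega)]
    exact hd.2 i j hi hij

lemma isTailPartition_tsub_iff {n : ℕ} (hn : 3 ≤ n) (d m : ℕ →₀ ℕ)
    (hm : ∀ k, k ≠ 1 → k ≠ 2 → k ≠ 3 → m k = 0) :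
    IsTailPartition n (d - m) ↔ IsTailPartition n d := by
  constructor <;> refine IsTailPartition.congr hn fun k h1 h2 h3 => ?_ <;>
    simp [hm k h1 h2 h3]

open Classical in
lemma coeff_fP {n : ℕ} (hn : 3 ≤ n) (d : ℕ →₀ ℕ) :
    coeff d (fP n) = if IsTailPartition n d ∧ d 4 ≤ d 2 ∧ d 5 ≤ d 2 ∧ d 4 ≤ d 3 ∧ d 5 ≤ d 3 ∧
      d 2 ≤ d 1 ∧ d 3 ≤ d 1 then 1 else 0 := by
  change (if _ then _ else _) = _
  refine if_congr ?_ rfl rfl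
  rw [forall_pOrd_iff n d, IsTailPartition, and_assoc]
  refine and_congr_right fun _ => ⟨fun h => ⟨fun i j _ => h i j, ?_⟩, ?_⟩
  · have middle (i j : ℕ) (hi : i = 2 ∨ i = 3) (hj : j = 4 ∨ j = 5) : d j ≤ d i :=
      h i j (Or.inr (Or.inl ⟨1, by omega⟩))
    exact ⟨middle 2 4 (by simp) (by simp), middle 2 5 (by simp) (by simp),
      middle 3 4 (by simp) (by simp), middle 3 5 (by simp) (by simp),
      h 1 2 (Or.inl (by simp)), h 1 3 (Or.inl (by simp))⟩
  · rintro ⟨h, h24, h25, h34, h35, h12, h13⟩ i j hij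
    by_cases hi : 4 ≤ i
    · exact h i j hi hij
    · rcases hij with ⟨rfl, rfl | rfl⟩ | ⟨k, hk, -, hik, hjk⟩ | hij
      · exact h12
      · exact h13
      · obtain rfl : k = 1 := by omega
        rcases hik with rfl | rfl <;> rcases hjk with rfl | rfl <;> assumption
      · omega

open Classical in
lemma coeff_fPsub {n : ℕ} (hn : 3 ≤ n) (d : ℕ →₀ ℕ) :
    coeff d (fPsub n) = if IsTailPartition n d ∧ d 1 = d 2 ∧ d 2 = d 3 ∧
      d 4 ≤ d 1 ∧ d 5 ≤ d 1 then 1 else 0 := by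
  change (if _ then _ else _) = _
  refine if_congr ?_ rfl rfl
  rw [forall_pOrd_iff (n - 1) fun i => if i = 1 then d 1 else d (i + 2), IsTailPartition]
  constructor
  · rintro ⟨hs, h12, h23, h⟩
    refine ⟨⟨hs, fun i j hi hij => ?_⟩, h12, h23, ?_, ?_⟩
    · obtain ⟨i, rfl⟩ := Nat.exists_eq_add_of_le' (show 2 ≤ i by omega)
      obtain ⟨j, rfl⟩ := Nat.exists_eq_add_of_le' (show 2 ≤ j by
        rcases hij with hij | ⟨k, hij⟩ | hij <;> omega)
      have hj : j ≠ 1 := by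
        rcases hij with hij | ⟨k, hij⟩ | hij <;> omega
      have := h i j (by
        rcases hij with hij | ⟨k, hij⟩ | hij
        · omega
        · exact Or.inr (Or.inl ⟨k - 1, by omega⟩)
        · exact Or.inr (Or.inr (by omega)))
      simpa [hj, show i ≠ 1 by omega] using this
    · simpa using h 1 2 (Or.inl (by simp))
    · simpa using h 1 3 (Or.inl (by simp))
  · rintro ⟨⟨hs, h⟩, h12, h23, h4, h5⟩
    refine ⟨hs, h12, h23, fun i j hij => ?_⟩
    have hj : j ≠ 1 := by
      rcases hij with hij | ⟨k, hij⟩ | hij <;> omega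
    by_cases hi : i = 1
    · obtain rfl | rfl : j = 2 ∨ j = 3 := by
        rcases hij with hij | ⟨k, hij⟩ | hij <;> omega
      · simpa [hi] using h4
      · simpa [hi] using h5
    · simp only [hi, hj, if_false]
      refine h _ _ ?_ ?_
      · rcases hij with hij | ⟨k, hij⟩ | hij <;> omega
      · rcases hij with hij | ⟨k, hij⟩ | hij
        · omega
        · exact Or.inr (Or.inl ⟨k + 1, by omega⟩)
        · exact Or.inr (Or.inr (by omega))

/-- The exponent vector of `x₁ᵃ x₂ᵇ x₃ᶜ`. -/
noncomputable def headExponent (a b c : ℕ) : ℕ →₀ ℕ :=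
  Finsupp.single 1 a + Finsupp.single 2 b + Finsupp.single 3 c

lemma headExponent_apply (a b c k : ℕ) :
    headExponent a b c k = if k = 1 then a else if k = 2 then b else if k = 3 then c else 0 := by
  simp only [headExponent, Finsupp.add_apply, Finsupp.single_apply]
  grind

lemma headExponent_le_iff (a b c : ℕ) (d : ℕ →₀ ℕ) :
    headExponent a b c ≤ d ↔ a ≤ d 1 ∧ b ≤ d 2 ∧ c ≤ d 3 := by
  refine ⟨fun h => ⟨?_, ?_, ?_⟩, fun h k => ?_⟩
  · simpa [headExponent_apply] using h 1
  · simpa [headExponent_apply] using h 2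
  · simpa [headExponent_apply] using h 3
  · rw [headExponent_apply]
    grind

lemma monomial_headExponent (a b c : ℕ) :
    monomial (headExponent a b c) (1 : ℤ) = X 1 ^ a * X 2 ^ b * X 3 ^ c := by
  simp [headExponent, X_pow_eq, monomial_mul_monomial]

open Classical in
/-- Multiplication by `1 - x₁ᵃ x₂ᵇ x₃ᶜ` for a series whose coefficients vanish off
tail partitions and otherwise depend only on the exponents of `x₁, …, x₅`. -/
lemma coeff_one_sub_mul {n : ℕ} (hn : 3 ≤ n) (a b c : ℕ) {f : MvPowerSeries ℕ ℤ}
    {F : ℕ → ℕ → ℕ → ℕ → ℕ → ℤ}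
    (hf : ∀ d, coeff d f =
      if IsTailPartition n d then F (d 1) (d 2) (d 3) (d 4) (d 5) else 0) (d : ℕ →₀ ℕ) :
    coeff d ((1 - X 1 ^ a * X 2 ^ b * X 3 ^ c) * f) =
      if IsTailPartition n d then F (d 1) (d 2) (d 3) (d 4) (d 5) -
        (if a ≤ d 1 ∧ b ≤ d 2 ∧ c ≤ d 3 then F (d 1 - a) (d 2 - b) (d 3 - c) (d 4) (d 5) else 0)
      else 0 := by
  rw [← monomial_headExponent, sub_mul, one_mul, map_sub, coeff_monomial_mul, hf, hf,
    isTailPartition_tsub_iff hn _ _ fun k h1 h2 h3 => by simp [headExponent_apply, h1, h2, h3]]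
  simp only [headExponent_le_iff, Finsupp.tsub_apply, headExponent_apply, one_mul]
  by_cases hT : IsTailPartition n d <;> simp [hT]

/-- The recurrence for the 2-rowed posets with double diagonals:
`(1-x₁)(1-x₁x₂)(1-x₁x₃) f_{P_n} = (1-x₁²x₂x₃) f_{P_{n-1}}(x₁x₂x₃,x₄,…,x_{2n})`. -/
theorem two_rowed_recurrence (n : ℕ) (hn : 3 ≤ n) :
    (1 - X 1) * (1 - X 1 * X 2) * (1 - X 1 * X 3) * fP n =
      (1 - X 1 ^ 2 * X 2 * X 3) * fPsub n := by
  classical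
  have h₀ (d : ℕ →₀ ℕ) : coeff d (fP n) = if IsTailPartition n d then
      (if d 4 ≤ d 2 ∧ d 5 ≤ d 2 ∧ d 4 ≤ d 3 ∧ d 5 ≤ d 3 ∧ d 2 ≤ d 1 ∧ d 3 ≤ d 1
        then (1 : ℤ) else 0) else 0 := by
    rw [coeff_fP hn, ite_and]
  have h₁ (d : ℕ →₀ ℕ) : coeff d ((1 - X 1 ^ 1 * X 2 ^ 0 * X 3 ^ 0) * fP n) =
      if IsTailPartition n d then
      (if d 4 ≤ d 2 ∧ d 5 ≤ d 2 ∧ d 4 ≤ d 3 ∧ d 5 ≤ d 3 ∧ d 1 = max (d 2) (d 3)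
        then (1 : ℤ) else 0) else 0 := by
    rw [coeff_one_sub_mul hn 1 0 0 (F := fun x₁ x₂ x₃ x₄ x₅ => if x₄ ≤ x₂ ∧ x₅ ≤ x₂ ∧ x₄ ≤ x₃ ∧
      x₅ ≤ x₃ ∧ x₂ ≤ x₁ ∧ x₃ ≤ x₁ then (1 : ℤ) else 0) h₀]
    refine if_congr Iff.rfl ?_ rfl
    split_ifs <;> omega
  have h₂ (d : ℕ →₀ ℕ) : coeff d ((1 - X 1 ^ 1 * X 2 ^ 1 * X 3 ^ 0) *
      ((1 - X 1 ^ 1 * X 2 ^ 0 * X 3 ^ 0) * fP n)) =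
      if IsTailPartition n d then
      (if d 4 ≤ d 2 ∧ d 5 ≤ d 2 ∧ d 2 ≤ d 3 ∧ d 1 = d 3 then (1 : ℤ)
        else if d 4 + 1 ≤ d 2 ∧ d 5 + 1 ≤ d 2 ∧ d 2 ≤ d 3 ∧ d 1 = d 3 + 1 then -1
        else 0) else 0 := by
    rw [coeff_one_sub_mul hn 1 1 0 (F := fun x₁ x₂ x₃ x₄ x₅ => if x₄ ≤ x₂ ∧ x₅ ≤ x₂ ∧ x₄ ≤ x₃ ∧
      x₅ ≤ x₃ ∧ x₁ = max x₂ x₃ then (1 : ℤ) else 0) h₁]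
    refine if_congr Iff.rfl ?_ rfl
    split_ifs <;> omega
  have hsub (d : ℕ →₀ ℕ) : coeff d (fPsub n) = if IsTailPartition n d then
      (if d 1 = d 2 ∧ d 2 = d 3 ∧ d 4 ≤ d 1 ∧ d 5 ≤ d 1 then (1 : ℤ) else 0) else 0 := by
    rw [coeff_fPsub hn, ite_and]
  have key : (1 - X 1 ^ 1 * X 2 ^ 0 * X 3 ^ 1) * ((1 - X 1 ^ 1 * X 2 ^ 1 * X 3 ^ 0) *
      ((1 - X 1 ^ 1 * X 2 ^ 0 * X 3 ^ 0) * fP n)) =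
      (1 - X 1 ^ 2 * X 2 ^ 1 * X 3 ^ 1) * fPsub n := by
    ext d
    rw [coeff_one_sub_mul hn 1 0 1 (F := fun x₁ x₂ x₃ x₄ x₅ => if x₄ ≤ x₂ ∧ x₅ ≤ x₂ ∧ x₂ ≤ x₃ ∧
        x₁ = x₃ then (1 : ℤ) else if x₄ + 1 ≤ x₂ ∧ x₅ + 1 ≤ x₂ ∧ x₂ ≤ x₃ ∧ x₁ = x₃ + 1 then -1
        else 0) h₂,
      coeff_one_sub_mul hn 2 1 1 (F := fun x₁ x₂ x₃ x₄ x₅ => if x₁ = x₂ ∧ x₂ = x₃ ∧ x₄ ≤ x₁ ∧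
        x₅ ≤ x₁ then (1 : ℤ) else 0) hsub]
    refine if_congr Iff.rfl ?_ rfl
    split_ifs <;> omega
  linear_combination key
end
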